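/- Let U_1, …, U_n be independent uniform-[0,1] random variables with order statistics U_{1:n} ≤ ⋯ ≤ U_{n:n}, and set p_{i,n} := i/(n+1). Then max_{1 ≤ i ≤ n} |U_{i:n} − p_{i,n}| → 0 in probability as n → ∞; more precisely, for every λ > 0, P(max_{1 ≤ i ≤ n} |U_{i:n} − p_{i,n}| > λ) ≤ 4n exp{−√n λ/20} for all sufficiently large n. -/

import Mathlib

/-!
Order statistics are governed by counts: `X_{i:n} < t` exactly when at least `i` of the `n` values
lie below `t`. Because `i - 1 ≤ n * (i / (n + 1)) ≤ i`, a deviation of `U_{i:n}` from `i / (n + 1)`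
by more than `lam` forces the binomial number of sample points in a half-line to exceed its mean by
at least `n * lam`, which by Hoeffding's inequality has probability at most
`exp (-2 * n * lam ^ 2)`. A union bound over the
`2 * n` one-sided deviations gives `2 * n * exp (-2 * n * lam ^ 2)`, which is eventually smaller
than the required bound and tends to zero.
-/

open MeasureTheory ProbabilityTheory Filter Set

/-- The `i`-th order statistic (indexed `i = 1, …, n`) of the values
`X 1 ω, …, X n ω`. -/
noncomputable def orderStat {Ω : Type*} (X : ℕ → Ω → ℝ) (n i : ℕ) (ω : Ω) : ℝ :=
  (((Finset.Icc 1 n).val.map (fun j => X j ω)).sort (· ≤ ·)).getD (i - 1) 0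

lemma pred_getElem_iff_lt_countP {α : Type*} [Preorder α] {p : α → Prop} [DecidablePred p]
    (hp : Antitone p) {l : List α} (hl : l.Pairwise (· ≤ ·)) {k : ℕ} (hk : k < l.length) :
    p l[k] ↔ k < l.countP (fun x => p x) := by
  induction l generalizing k with
  | nil => simp at hk
  | cons a l ih =>
    obtain ⟨ha, hl⟩ := List.pairwise_cons.1 hl
    by_cases hpa : p a
    · cases k with
      | zero => simp [hpa]
      | succ k => simpa [hpa] using ih hl (by simpa using hk)
    · have hnone : ∀ x ∈ a :: l, ¬ p x := by
        simpa [hpa] using fun x hx hpx => hpa (hp (ha x hx) hpx)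
      have hcount : (a :: l).countP (fun x => p x) = 0 := by simpa [List.countP_eq_zero] using hnone
      simpa [hcount] using hnone _ (List.getElem_mem hk)

section OrderStatistic

variable {Ω : Type*} {X : ℕ → Ω → ℝ} {n i : ℕ} {ω : Ω}

lemma orderStat_eq_getElem (hi : i ∈ Finset.Icc 1 n) :
    orderStat X n i ω = (((Finset.Icc 1 n).val.map (X · ω)).sort (· ≤ ·))[i - 1]'(by
      grind [Multiset.length_sort, Multiset.card_map, Finset.card_val, Nat.card_Icc]) :=
  List.getD_eq_getElem _ _ _

lemma exists_orderStat_eq (hi : i ∈ Finset.Icc 1 n) :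
    ∃ j ∈ Finset.Icc 1 n, orderStat X n i ω = X j ω := by
  have hmem : orderStat X n i ω ∈ ((Finset.Icc 1 n).val.map (X · ω)).sort (· ≤ ·) :=
    orderStat_eq_getElem hi ▸ List.getElem_mem _
  obtain ⟨j, hj, hjX⟩ := Multiset.mem_map.1 ((Multiset.mem_sort _).1 hmem)
  exact ⟨j, hj, hjX.symm⟩

lemma pred_orderStat_iff {p : ℝ → Prop} [DecidablePred p] (hp : Antitone p)
    (hi : i ∈ Finset.Icc 1 n) :
    p (orderStat X n i ω) ↔ i ≤ Finset.card {j ∈ Finset.Icc 1 n | p (X j ω)} := by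
  have hcount : (((Finset.Icc 1 n).val.map (X · ω)).sort (· ≤ ·)).countP (fun x => p x)
      = Finset.card {j ∈ Finset.Icc 1 n | p (X j ω)} := by
    rw [← Multiset.coe_countP, Multiset.sort_eq, Multiset.countP_map]
    rfl
  have hi1 := (Finset.mem_Icc.1 hi).1
  rw [orderStat_eq_getElem hi, pred_getElem_iff_lt_countP hp (Multiset.pairwise_sort _ _), hcount]
  lia

lemma orderStat_lt_iff (hi : i ∈ Finset.Icc 1 n) {t : ℝ} :
    orderStat X n i ω < t ↔ i ≤ Finset.card {j ∈ Finset.Icc 1 n | X j ω ∈ Iio t} :=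
  pred_orderStat_iff (p := (· < t)) (fun _ _ hab hb => hab.trans_lt hb) hi

lemma lt_orderStat_iff (hi : i ∈ Finset.Icc 1 n) {t : ℝ} :
    t < orderStat X n i ω ↔ n < i + Finset.card {j ∈ Finset.Icc 1 n | X j ω ∈ Ioi t} := by
  have hle : orderStat X n i ω ≤ t ↔ i ≤ Finset.card {j ∈ Finset.Icc 1 n | X j ω ≤ t} :=
    pred_orderStat_iff (p := (· ≤ t)) (fun _ _ hab hb => hab.trans hb) hi
  have hsplit := Finset.card_filter_add_card_filter_not (s := Finset.Icc 1 n) (X · ω ≤ t)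
  simp only [Nat.card_Icc, not_le] at hsplit
  simp only [mem_Ioi]
  rw [← not_le, hle]
  lia

end OrderStatistic

section Hoeffding

variable {Ω ι : Type*} [MeasurableSpace Ω] {P : Measure Ω} {s : Finset ι}

lemma measureReal_sum_ge_le_of_mem_Icc {X : ι → Ω → ℝ} {a b : ι → ℝ} (hindep : iIndepFun X P)
    (hmeas : ∀ i ∈ s, AEMeasurable (X i) P) (hbdd : ∀ i ∈ s, ∀ᵐ ω ∂P, X i ω ∈ Icc (a i) (b i))
    {ε : ℝ} (hε : 0 ≤ ε) :
    P.real {ω | ∑ i ∈ s, P[X i] + ε ≤ ∑ i ∈ s, X i ω}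
      ≤ Real.exp (-2 * ε ^ 2 / ∑ i ∈ s, (b i - a i) ^ 2) := by
  have := hindep.isProbabilityMeasure
  have hcentered : iIndepFun (fun i ω => X i ω - P[X i]) P :=
    hindep.comp (fun i x => x - ∫ ω, X i ω ∂P) fun _ => measurable_id.sub_const _
  have hsubG : ∀ i ∈ s, HasSubgaussianMGF (fun ω => X i ω - P[X i]) ((‖b i - a i‖₊ / 2) ^ 2) P :=
    fun i hi => hasSubgaussianMGF_of_mem_Icc (hmeas i hi) (hbdd i hi)
  convert HasSubgaussianMGF.measure_sum_ge_le_of_iIndepFun hcentered hsubG hε using 2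
  · simp only [Finset.sum_sub_distrib, le_sub_iff_add_le']
  · have hvar : ∑ i ∈ s, (b i - a i) ^ 2 = 4 * ∑ i ∈ s, (‖b i - a i‖ / 2) ^ 2 := by
      simp only [div_pow, Real.norm_eq_abs, sq_abs, ← Finset.sum_div]; ring
    push_cast
    rw [hvar]; ring

lemma measureReal_card_filter_ge_le_of_hasLaw {𝓧 : Type*} [MeasurableSpace 𝓧] {μ : Measure 𝓧}
    {X : ι → Ω → 𝓧} (hindep : iIndepFun X P) (hlaw : ∀ i ∈ s, HasLaw (X i) μ P)
    {A : Set 𝓧} [DecidablePred (· ∈ A)] (hA : MeasurableSet A) {lam : ℝ} (hlam : 0 ≤ lam) :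
    P.real {ω | s.card * (μ.real A + lam) ≤ Finset.card {i ∈ s | X i ω ∈ A}}
      ≤ Real.exp (-2 * s.card * lam ^ 2) := by
  have hmeas : Measurable (A.indicator (1 : 𝓧 → ℝ)) := measurable_one.indicator hA
  have hmean : ∀ i ∈ s, P[A.indicator (1 : 𝓧 → ℝ) ∘ X i] = μ.real A := fun i hi => by
    rw [(hlaw i hi).integral_comp hmeas.aestronglyMeasurable, integral_indicator_one hA]
  have hoeffding := measureReal_sum_ge_le_of_mem_Icc (s := s) (a := 0) (b := 1)
    (hindep.comp (fun _ => A.indicator (1 : 𝓧 → ℝ)) fun _ => hmeas)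
    (fun i hi => hmeas.comp_aemeasurable (hlaw i hi).aemeasurable)
    (fun i _ => ae_of_all _ fun ω => by by_cases h : X i ω ∈ A <;> simp [h])
    (mul_nonneg s.card.cast_nonneg hlam)
  rw [Finset.sum_congr rfl hmean] at hoeffding
  convert hoeffding using 2
  · simp [mul_add, Set.indicator_apply]
  · rcases s.eq_empty_or_nonempty with rfl | hs
    · simp
    · have hcard : (s.card : ℝ) ≠ 0 := Nat.cast_ne_zero.2 hs.card_ne_zero
      simp only [Pi.one_apply, Pi.zero_apply, sub_zero, one_pow, Finset.sum_const, nsmul_one]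
      field_simp

end Hoeffding

section UniformLaw

variable {a b t : ℝ}

lemma measureReal_restrict_Icc_Iio (ht : t ∈ Icc a b) :
    (volume.restrict (Icc a b)).real (Iio t) = t - a := by
  have hinter : Iio t ∩ Icc a b = Ico a t := by
    ext x; grind [ht.2]
  rw [measureReal_restrict_apply measurableSet_Iio, hinter, Real.volume_real_Ico_of_le ht.1]

lemma measureReal_restrict_Icc_Ioi (ht : t ∈ Icc a b) :
    (volume.restrict (Icc a b)).real (Ioi t) = b - t := by
  have hinter : Ioi t ∩ Icc a b = Ioc t b := by
    ext x; grind [ht.1]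
  rw [measureReal_restrict_apply measurableSet_Ioi, hinter, Real.volume_real_Ioc_of_le ht.2]

end UniformLaw

lemma natCast_div_add_one_mem_Icc {i n : ℕ} (hi : i ≤ n) : (i : ℝ) / (n + 1) ∈ Icc 0 1 :=
  unitInterval.div_mem i.cast_nonneg n.cast_add_one_pos.le (mod_cast hi.trans n.le_succ)

section Deviation

variable {Ω : Type*} [MeasurableSpace Ω] {P : Measure Ω} {U : ℕ → Ω → ℝ} {n i : ℕ} {lam t : ℝ}

lemma ae_orderStat_mem {A : Set ℝ} (hU : ∀ j, ∀ᵐ ω ∂P, U j ω ∈ A) (hi : i ∈ Finset.Icc 1 n) :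
    ∀ᵐ ω ∂P, orderStat U n i ω ∈ A := by
  filter_upwards [ae_all_iff.2 hU] with ω hω
  obtain ⟨j, -, hj⟩ := exists_orderStat_eq (X := U) (ω := ω) hi
  exact hj ▸ hω j

lemma ae_orderStat_mem_Icc_of_uniform
    (hunif : ∀ j, HasLaw (U j) (volume.restrict (Icc 0 1)) P) (hi : i ∈ Finset.Icc 1 n) :
    ∀ᵐ ω ∂P, orderStat U n i ω ∈ Icc 0 1 :=
  ae_orderStat_mem (fun j => ((hunif j).ae_iff measurableSet_Icc.mem).2
    (ae_restrict_mem measurableSet_Icc)) hi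

lemma measureReal_orderStat_lt_le {μ : Measure ℝ} (hindep : iIndepFun U P)
    (hlaw : ∀ j, HasLaw (U j) μ P) (hi : i ∈ Finset.Icc 1 n) (hlam : 0 ≤ lam)
    (ht : n * (μ.real (Iio t) + lam) ≤ i) :
    P.real {ω | orderStat U n i ω < t} ≤ Real.exp (-2 * n * lam ^ 2) := by
  have := hindep.isProbabilityMeasure
  have hcount := measureReal_card_filter_ge_le_of_hasLaw (s := Finset.Icc 1 n) hindep
    (fun j _ => hlaw j) (measurableSet_Iio (a := t)) hlam
  rw [Nat.card_Icc, Nat.add_sub_cancel] at hcount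
  refine (measureReal_mono fun ω hω => ?_).trans hcount
  exact ht.trans (Nat.cast_le.2 ((orderStat_lt_iff hi).1 hω))

lemma measureReal_lt_orderStat_le {μ : Measure ℝ} (hindep : iIndepFun U P)
    (hlaw : ∀ j, HasLaw (U j) μ P) (hi : i ∈ Finset.Icc 1 n) (hlam : 0 ≤ lam)
    (ht : n * (μ.real (Ioi t) + lam) ≤ n - i + 1) :
    P.real {ω | t < orderStat U n i ω} ≤ Real.exp (-2 * n * lam ^ 2) := by
  have := hindep.isProbabilityMeasure
  have hcount := measureReal_card_filter_ge_le_of_hasLaw (s := Finset.Icc 1 n) hindep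
    (fun j _ => hlaw j) (measurableSet_Ioi (a := t)) hlam
  rw [Nat.card_Icc, Nat.add_sub_cancel] at hcount
  refine (measureReal_mono fun ω hω => ht.trans ?_).trans hcount
  have hrank : (n : ℝ) + 1 ≤ i + Finset.card {j ∈ Finset.Icc 1 n | U j ω ∈ Ioi t} :=
    mod_cast (lt_orderStat_iff hi).1 hω
  linarith

lemma measureReal_orderStat_lt_sub_le_of_uniform (hindep : iIndepFun U P)
    (hunif : ∀ j, HasLaw (U j) (volume.restrict (Icc 0 1)) P) (hi : i ∈ Finset.Icc 1 n)
    (hlam : 0 ≤ lam) :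
    P.real {ω | orderStat U n i ω < i / (n + 1) - lam} ≤ Real.exp (-2 * n * lam ^ 2) := by
  have := hindep.isProbabilityMeasure
  rcases le_or_gt ((i : ℝ) / (n + 1) - lam) 0 with ht | ht
  · have hnull : P.real {ω | orderStat U n i ω < i / (n + 1) - lam} = 0 := by
      rw [measureReal_eq_zero_iff, measure_eq_zero_iff_ae_notMem]
      filter_upwards [ae_orderStat_mem_Icc_of_uniform hunif hi] with ω hω hlt
      exact (hω.1.trans_lt hlt).not_ge ht
    exact hnull ▸ (Real.exp_pos _).le
  · refine measureReal_orderStat_lt_le hindep hunif hi hlam ?_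
    have hp := natCast_div_add_one_mem_Icc (Finset.mem_Icc.1 hi).2
    have hpn : (i : ℝ) / (n + 1) * (n + 1) = i := div_mul_cancel₀ _ (by positivity)
    rw [measureReal_restrict_Icc_Iio ⟨ht.le, by linarith [hp.2]⟩]
    linarith [hp.1]

lemma measureReal_add_lt_orderStat_le_of_uniform (hindep : iIndepFun U P)
    (hunif : ∀ j, HasLaw (U j) (volume.restrict (Icc 0 1)) P) (hi : i ∈ Finset.Icc 1 n)
    (hlam : 0 ≤ lam) :
    P.real {ω | i / (n + 1) + lam < orderStat U n i ω} ≤ Real.exp (-2 * n * lam ^ 2) := by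
  have := hindep.isProbabilityMeasure
  rcases le_or_gt 1 ((i : ℝ) / (n + 1) + lam) with ht | ht
  · have hnull : P.real {ω | i / (n + 1) + lam < orderStat U n i ω} = 0 := by
      rw [measureReal_eq_zero_iff, measure_eq_zero_iff_ae_notMem]
      filter_upwards [ae_orderStat_mem_Icc_of_uniform hunif hi] with ω hω hlt
      exact (hlt.trans_le hω.2).not_ge ht
    exact hnull ▸ (Real.exp_pos _).le
  · refine measureReal_lt_orderStat_le hindep hunif hi hlam ?_
    have hp := natCast_div_add_one_mem_Icc (Finset.mem_Icc.1 hi).2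
    have hpn : (i : ℝ) / (n + 1) * (n + 1) = i := div_mul_cancel₀ _ (by positivity)
    rw [measureReal_restrict_Icc_Ioi ⟨by linarith [hp.1], ht.le⟩]
    linarith [hp.2]

lemma measureReal_lt_abs_orderStat_sub_le_of_uniform (hindep : iIndepFun U P)
    (hunif : ∀ j, HasLaw (U j) (volume.restrict (Icc 0 1)) P) (hi : i ∈ Finset.Icc 1 n)
    (hlam : 0 ≤ lam) :
    P.real {ω | lam < |orderStat U n i ω - i / (n + 1)|} ≤ 2 * Real.exp (-2 * n * lam ^ 2) := by
  have := hindep.isProbabilityMeasure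
  have hsplit : {ω | lam < |orderStat U n i ω - i / (n + 1)|} ⊆
      {ω | i / (n + 1) + lam < orderStat U n i ω} ∪ {ω | orderStat U n i ω < i / (n + 1) - lam} :=
    fun ω hω => (lt_abs.1 (mem_ofPred.1 hω)).imp lt_sub_iff_add_lt'.1
      fun h => lt_sub_comm.1 (neg_sub (orderStat U n i ω) _ ▸ h)
  calc P.real {ω | lam < |orderStat U n i ω - i / (n + 1)|}
      ≤ P.real {ω | i / (n + 1) + lam < orderStat U n i ω}
        + P.real {ω | orderStat U n i ω < i / (n + 1) - lam} :=
        (measureReal_mono hsplit).trans (measureReal_union_le _ _)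
    _ ≤ Real.exp (-2 * n * lam ^ 2) + Real.exp (-2 * n * lam ^ 2) :=
        add_le_add (measureReal_add_lt_orderStat_le_of_uniform hindep hunif hi hlam)
          (measureReal_orderStat_lt_sub_le_of_uniform hindep hunif hi hlam)
    _ = 2 * Real.exp (-2 * n * lam ^ 2) := (two_mul _).symm

lemma measureReal_exists_lt_abs_orderStat_sub_le_of_uniform (hindep : iIndepFun U P)
    (hunif : ∀ j, HasLaw (U j) (volume.restrict (Icc 0 1)) P) (hlam : 0 ≤ lam) (n : ℕ) :
    P.real {ω | ∃ i ∈ Finset.Icc 1 n, lam < |orderStat U n i ω - i / (n + 1)|}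
      ≤ 2 * n * Real.exp (-2 * n * lam ^ 2) := by
  have hunion : {ω | ∃ i ∈ Finset.Icc 1 n, lam < |orderStat U n i ω - i / (n + 1)|}
      = ⋃ i ∈ Finset.Icc 1 n, {ω | lam < |orderStat U n i ω - i / (n + 1)|} := by
    ext ω; simp
  calc P.real {ω | ∃ i ∈ Finset.Icc 1 n, lam < |orderStat U n i ω - i / (n + 1)|}
      ≤ ∑ i ∈ Finset.Icc 1 n, P.real {ω | lam < |orderStat U n i ω - i / (n + 1)|} :=
        hunion ▸ measureReal_biUnion_finset_le _ _
    _ ≤ ∑ i ∈ Finset.Icc 1 n, 2 * Real.exp (-2 * n * lam ^ 2) :=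
        Finset.sum_le_sum fun i hi =>
          measureReal_lt_abs_orderStat_sub_le_of_uniform hindep hunif hi hlam
    _ = 2 * n * Real.exp (-2 * n * lam ^ 2) := by
        rw [Finset.sum_const, Nat.card_Icc, Nat.add_sub_cancel, nsmul_eq_mul]; ring

end Deviation

section Asymptotics

variable {lam : ℝ}

lemma tendsto_two_mul_nat_mul_exp_neg_two_mul_sq (hlam : lam ≠ 0) :
    Tendsto (fun n : ℕ => 2 * n * Real.exp (-2 * n * lam ^ 2)) atTop (nhds 0) := by
  have hsum := Real.summable_pow_mul_exp_neg_nat_mul 1 (r := 2 * lam ^ 2) (by positivity)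
  simpa [mul_assoc, mul_comm, mul_left_comm] using hsum.tendsto_atTop_zero.const_mul 2

lemma eventually_two_mul_nat_mul_exp_le_four_mul_nat_mul_exp_sqrt (hlam : 0 < lam) :
    ∀ᶠ n : ℕ in atTop, 2 * n * Real.exp (-2 * n * lam ^ 2)
      ≤ 4 * n * Real.exp (-(Real.sqrt n * lam) / 20) := by
  have hlarge : ∀ᶠ n : ℕ in atTop, 1 ≤ Real.sqrt n * lam :=
    ((Real.tendsto_sqrt_atTop.comp tendsto_natCast_atTop_atTop).atTop_mul_const
      hlam).eventually_ge_atTop 1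
  filter_upwards [hlarge] with n hn
  have hexponent : -2 * n * lam ^ 2 ≤ -(Real.sqrt n * lam) / 20 := by
    have hsq : (n : ℝ) * lam ^ 2 = (Real.sqrt n * lam) ^ 2 := by
      rw [mul_pow, Real.sq_sqrt n.cast_nonneg]
    nlinarith
  gcongr
  norm_num

end Asymptotics

/-- For iid uniform-[0,1] random variables with order statistics
`U_{1:n} ≤ ⋯ ≤ U_{n:n}` and `p_{i,n} = i/(n+1)`,
`max_{1 ≤ i ≤ n} |U_{i:n} − p_{i,n}| → 0` in probability; more precisely, for every
`λ > 0`, `P(max_{1 ≤ i ≤ n} |U_{i:n} − p_{i,n}| > λ) ≤ 4 n exp(−√n λ/20)` for all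
sufficiently large `n`. -/
theorem max_deviation_order_statistics
    {Ω : Type*} [MeasurableSpace Ω] (P : Measure Ω) [IsProbabilityMeasure P]
    (U : ℕ → Ω → ℝ)
    (hUmeas : ∀ i, Measurable (U i))
    (hUindep : iIndepFun U P)
    (hUunif : ∀ i, Measure.map (U i) P = volume.restrict (Icc (0:ℝ) 1)) :
    (∀ ε : ℝ, 0 < ε →
      Tendsto (fun n : ℕ =>
        P {ω | ∃ i ∈ Finset.Icc 1 n, ε < |orderStat U n i ω - (i:ℝ) / ((n:ℝ) + 1)|})
        atTop (nhds 0)) ∧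
    ∀ lam : ℝ, 0 < lam → ∃ N : ℕ, ∀ n ≥ N,
      P {ω | ∃ i ∈ Finset.Icc 1 n, lam < |orderStat U n i ω - (i:ℝ) / ((n:ℝ) + 1)|}
        ≤ ENNReal.ofReal (4 * n * Real.exp (-(Real.sqrt n * lam) / 20)) := by
  have hbound (lam : ℝ) (hlam : 0 ≤ lam) :=
    measureReal_exists_lt_abs_orderStat_sub_le_of_uniform hUindep
      (fun i => ⟨(hUmeas i).aemeasurable, hUunif i⟩) hlam
  refine ⟨fun ε hε => ?_, fun lam hlam => ?_⟩
  · rw [← ENNReal.tendsto_toReal_zero_iff]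
    exact squeeze_zero (fun _ => measureReal_nonneg) (hbound ε hε.le)
      (tendsto_two_mul_nat_mul_exp_neg_two_mul_sq hε.ne')
  · obtain ⟨N, hN⟩ := eventually_atTop.1
      (eventually_two_mul_nat_mul_exp_le_four_mul_nat_mul_exp_sqrt hlam)
    refine ⟨N, fun n hn => ?_⟩
    rw [← ofReal_measureReal]
    exact ENNReal.ofReal_le_ofReal ((hbound lam hlam.le n).trans (hN n hn))
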